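/- arXiv:1110.0224 — 5 statements merged into one kernel-verified Lean document; each statement's English description precedes it below -/
import Mathlib

section
/- (Theorem 1, lower bound.) Let n > d > ℓ ≥ 1 be integers and let r be the unique integer with 0 < r ≤ ℓ+1 and r ≡ d+1 (mod ℓ+1). Then pc^(ℓ)(n,d) ≥ ⌈(d+1)/(ℓ+1)⌉^r · ⌊(d+1)/(ℓ+1)⌋^(ℓ+1-r), i.e. there exists a d,ℓ-polychromatic coloring of H_n^ℓ using ⌈(d+1)/(ℓ+1)⌉^r · ⌊(d+1)/(ℓ+1)⌋^(ℓ+1-r) colors. -/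
/-!
The coloring records, for an `ℓ`-dimensional subcube `A`, the number of ones of `A` in each of the
`ℓ + 1` gaps into which its ∗-coordinates cut `[n]`, the count in gap `j` being reduced modulo
`m j`. Here `m 0 + ⋯ + m ℓ = d + 1`, with `r` of the `m j` equal to `⌈(d+1)/(ℓ+1)⌉` and the others
equal to `⌊(d+1)/(ℓ+1)⌋`, so the number of colors is the required product.

A `d`-dimensional subcube `B` has `d = ℓ + ∑ (m j - 1)` ∗-coordinates. Keep `ℓ` of them as ∗ in such
a way that exactly `m j - 1` of the others lie in gap `j`. The ones of `B` in that gap contribute a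
fixed amount `f j`, and the `m j - 1` freed coordinates can be filled so as to add any number from
`0` to `m j - 1` (`exists_subcube_gapOnes`). Hence every residue modulo `m j` is attained,
independently in all the gaps. The set of admissible numbers of colors is bounded by the number of
subcubes, so the supremum defining `polyNum` is at least the number of colors used.
-/

/-- The dimension of a subcube of `Q_n`, represented as a function
`Fin n → Option Bool` (`none` = ∗): the number of ∗-coordinates. -/
def Subcube.dim {n : ℕ} (s : Fin n → Option Bool) : ℕ :=
  (Finset.univ.filter (fun i => s i = none)).card

/-- `cubes n ℓ` is `H_n^ℓ`, the set of all `ℓ`-dimensional subcubes of `Q_n`. -/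
def cubes (n ℓ : ℕ) : Finset (Fin n → Option Bool) :=
  Finset.univ.filter (fun s => Subcube.dim s = ℓ)

/-- `containedIn A B`: the subcube `A` is contained in the subcube `B`, i.e. every
∗-coordinate of `A` is a ∗-coordinate of `B` and they agree wherever both are non-∗
(equivalently every coordinate fixed in `B` is fixed to the same value in `A`). -/
def containedIn {n : ℕ} (A B : Fin n → Option Bool) : Prop :=
  ∀ i : Fin n, ∀ b : Bool, B i = some b → A i = some b

instance {n : ℕ} (A B : Fin n → Option Bool) : Decidable (containedIn A B) := by
  unfold containedIn; infer_instance

/-- `IsCover n d ℓ S`: `S` is a `(d,ℓ)`-covering set of `Q_n`. -/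
def IsCover (n d ℓ : ℕ) (S : Finset (Fin n → Option Bool)) : Prop :=
  S ⊆ cubes n ℓ ∧ ∀ B ∈ cubes n d, ∃ A ∈ S, containedIn A B

/-- `coverNum n d ℓ = f^(ℓ)(n,d)`, the minimum size of a `(d,ℓ)`-covering set of `Q_n`. -/
noncomputable def coverNum (n d ℓ : ℕ) : ℕ :=
  sInf {k | ∃ S : Finset (Fin n → Option Bool), IsCover n d ℓ S ∧ S.card = k}

/-- `polyNum n d ℓ = pc^(ℓ)(n,d)`, the largest number `m` of colors admitting a
`d,ℓ`-polychromatic coloring of `H_n^ℓ`. -/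
noncomputable def polyNum (n d ℓ : ℕ) : ℕ :=
  sSup {m | ∃ χ : (Fin n → Option Bool) → Fin m,
    ∀ B ∈ cubes n d, ∀ c : Fin m, ∃ A ∈ cubes n ℓ, containedIn A B ∧ χ A = c}

/-- `gapOnes A j` is the number of ones of `A` in gap `j`, i.e. the number of coordinates `i` with
`A i = some true` preceded by exactly `j` ∗-coordinates of `A`; the coordinates are read off one at
a time from the first. -/
def gapOnes : {n : ℕ} → (Fin n → Option Bool) → ℕ → ℕ
  | 0, _, _ => 0
  | _ + 1, A, j =>
    match A 0, j with
    | none, 0 => 0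
    | none, j + 1 => gapOnes (Fin.tail A) j
    | some b, j => gapOnes (Fin.tail A) j + if b = true ∧ j = 0 then 1 else 0

theorem gapOnes_cons_none_zero {n : ℕ} (A : Fin n → Option Bool) :
    gapOnes (Fin.cons none A : Fin (n + 1) → Option Bool) 0 = 0 := by
  simp [gapOnes]

theorem gapOnes_cons_none_succ {n : ℕ} (A : Fin n → Option Bool) (j : ℕ) :
    gapOnes (Fin.cons none A : Fin (n + 1) → Option Bool) (j + 1) = gapOnes A j := by
  simp [gapOnes]

theorem gapOnes_cons_some {n : ℕ} (A : Fin n → Option Bool) (b : Bool) (j : ℕ) :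
    gapOnes (Fin.cons (some b) A : Fin (n + 1) → Option Bool) j =
      gapOnes A j + if b = true ∧ j = 0 then 1 else 0 := by
  cases j <;> simp [gapOnes]

theorem dim_cons {n : ℕ} (o : Option Bool) (A : Fin n → Option Bool) :
    Subcube.dim (Fin.cons o A : Fin (n + 1) → Option Bool) =
      (if o = none then 1 else 0) + Subcube.dim A := by
  unfold Subcube.dim
  rw [Fin.card_filter_univ_succ]
  simp only [Fin.cons_zero, Fin.cons_succ]
  split_ifs <;> omega

theorem containedIn_cons {n : ℕ} {o p : Option Bool} {A B : Fin n → Option Bool}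
    (hop : ∀ b, p = some b → o = some b) (h : containedIn A B) :
    containedIn (Fin.cons o A : Fin (n + 1) → Option Bool) (Fin.cons p B) := by
  intro i
  refine Fin.cases ?_ (fun i => ?_) i
  · simpa using hop
  · simpa using h i

/-- If `B` has `ℓ + ∑ a j` ∗-coordinates, then `ℓ` of them can be kept so that `a j` of the remaining
ones fall into gap `j`; the number of ones in gap `j` then takes every value from `f j` to
`f j + a j`, independently for all `j`, where `f j` counts the ones of `B` there. The induction
removes the first coordinate. -/
theorem exists_subcube_gapOnes {n : ℕ} : ∀ (ℓ : ℕ) (a : ℕ → ℕ) (B : Fin n → Option Bool),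
    Subcube.dim B = ∑ j ∈ Finset.range (ℓ + 1), a j + ℓ →
    ∃ f : ℕ → ℕ, ∀ x : ℕ → ℕ, (∀ j ≤ ℓ, x j ≤ a j) →
      ∃ A : Fin n → Option Bool, Subcube.dim A = ℓ ∧ containedIn A B ∧
        ∀ j ≤ ℓ, gapOnes A j = f j + x j := by
  induction n with
  | zero =>
    intro ℓ a B hB
    have h0 : Subcube.dim B = 0 := by simp [Subcube.dim]
    rw [h0] at hB
    refine ⟨fun _ => 0, fun x hx => ⟨B, by omega, fun i => i.elim0, fun j hj => ?_⟩⟩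
    have h1 : a j ≤ ∑ j ∈ Finset.range (ℓ + 1), a j :=
      Finset.single_le_sum (fun _ _ => Nat.zero_le _) (Finset.mem_range.2 (by omega))
    have := hx j hj
    simp only [gapOnes]
    omega
  | succ n ih =>
    intro ℓ a B hB
    induction B using Fin.consCases with
    | _ o B =>
    rw [dim_cons] at hB
    cases o with
    | some b =>
      obtain ⟨f, hf⟩ := ih ℓ a B (by simpa using hB)
      refine ⟨fun j => f j + if b = true ∧ j = 0 then 1 else 0, fun x hx => ?_⟩
      obtain ⟨A, hA, hAB, hc⟩ := hf x hx
      refine ⟨Fin.cons (some b) A, by simp [dim_cons, hA], containedIn_cons (by simp) hAB,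
        fun j hj => ?_⟩
      rw [gapOnes_cons_some, hc j hj]
      exact Nat.add_right_comm _ _ _
    | none =>
      rw [if_pos rfl] at hB
      rcases Nat.eq_zero_or_pos (a 0) with ha | ha
      · -- The current gap needs no more freed coordinates: this ∗ is kept, and closes the gap.
        rw [Finset.sum_range_succ', ha] at hB
        obtain _ | ℓ := ℓ
        · simp at hB
        obtain ⟨f, hf⟩ := ih ℓ (fun j => a (j + 1)) B (by omega)
        refine ⟨fun j => j.casesOn 0 f, fun x hx => ?_⟩
        obtain ⟨A, hA, hAB, hc⟩ := hf (fun j => x (j + 1)) (fun j hj => hx _ (by omega))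
        refine ⟨Fin.cons none A, by simp [dim_cons, hA]; omega, containedIn_cons (by simp) hAB,
          fun j hj => ?_⟩
        cases j with
        | zero =>
          have := hx 0 hj
          rw [gapOnes_cons_none_zero]
          show 0 = 0 + x 0
          omega
        | succ j => rw [gapOnes_cons_none_succ, hc j (by omega)]
      · -- This ∗ is freed: it becomes a one exactly when the later ones cannot supply `x 0`.
        have hs := hB
        rw [Finset.sum_range_succ'] at hs
        obtain ⟨f, hf⟩ := ih ℓ (fun j => if j = 0 then a 0 - 1 else a j) B (by
          rw [Finset.sum_range_succ']
          simp only [Nat.add_eq_zero_iff, one_ne_zero, and_false, if_false, if_true]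
          omega)
        refine ⟨f, fun x hx => ?_⟩
        have hx0 := hx 0 (by omega)
        obtain ⟨A, hA, hAB, hc⟩ := hf (fun j => if j = 0 then min (x 0) (a 0 - 1) else x j)
          (fun j hj => by
            have := hx j hj
            split_ifs with h
            · subst h; omega
            · omega)
        refine ⟨Fin.cons (some (decide (x 0 = a 0))) A, by simp [dim_cons, hA],
          containedIn_cons (by simp) hAB, fun j hj => ?_⟩
        rw [gapOnes_cons_some, hc j hj]
        rcases Nat.eq_zero_or_pos j with rfl | hj0
        · simp only [decide_eq_true_eq, and_true, if_true]
          split_ifs <;> omega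
        · have : j ≠ 0 := by omega
          simp [this]

/-- The coloring for arbitrary moduli `m 0, …, m ℓ` summing to `d + 1`. -/
theorem exists_polychromatic {n d ℓ : ℕ} (m : ℕ → ℕ) (hm : ∀ j, 0 < m j)
    (hsum : ∑ j ∈ Finset.range (ℓ + 1), m j = d + 1) :
    ∃ χ : (Fin n → Option Bool) → Fin (∏ j ∈ Finset.range (ℓ + 1), m j),
      ∀ B ∈ cubes n d, ∀ c, ∃ A ∈ cubes n ℓ, containedIn A B ∧ χ A = c := by
  have e : (∀ j : Fin (ℓ + 1), Fin (m j)) ≃ Fin (∏ j ∈ Finset.range (ℓ + 1), m j) :=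
    Fintype.equivFinOfCardEq (by simp [Finset.prod_range])
  refine ⟨fun A => e fun j => ⟨gapOnes A j % m j, Nat.mod_lt _ (hm j)⟩, fun B hB c => ?_⟩
  have hd : Subcube.dim B = d := by simpa [cubes] using hB
  have hs : ∑ j ∈ Finset.range (ℓ + 1), (m j - 1) + (ℓ + 1) = d + 1 := by
    rw [← hsum, ← Finset.sum_congr rfl (fun j _ => Nat.sub_add_cancel (hm j)),
      Finset.sum_add_distrib]
    simp
  obtain ⟨f, hf⟩ := exists_subcube_gapOnes ℓ (fun j => m j - 1) B (by omega)
  -- `x j` is the representative in `[0, m j)` of the target residue minus `f j`; adding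
  -- `m j * f j` first keeps the subtraction within the naturals.
  let t : ℕ → ℕ := fun j => if h : j < ℓ + 1 then (e.symm c ⟨j, h⟩ : ℕ) else 0
  obtain ⟨A, hA, hAB, hc⟩ := hf (fun j => (t j + (m j * f j - f j)) % m j)
    (fun j _ => Nat.le_sub_one_of_lt (Nat.mod_lt _ (hm j)))
  refine ⟨A, by simpa [cubes] using hA, hAB, ?_⟩
  rw [← Equiv.eq_symm_apply]
  funext j
  apply Fin.ext
  have ht : t j = (e.symm c j : ℕ) := dif_pos j.isLt
  have hle : f j ≤ m j * f j := Nat.le_mul_of_pos_left _ (hm j)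
  have hadd : f j + (t j + (m j * f j - f j)) = t j + m j * f j := by omega
  simp only
  rw [hc j (by omega), Nat.add_mod_mod, hadd, Nat.add_mul_mod_self_left, ht,
    Nat.mod_eq_of_lt (e.symm c j).isLt]

theorem cubes_nonempty {n d : ℕ} (hdn : d ≤ n) : (cubes n d).Nonempty := by
  refine ⟨fun i => if (i : ℕ) < d then none else some false, ?_⟩
  have h : ∀ i : Fin n, ((if (i : ℕ) < d then none else some false : Option Bool) = none) ↔
      (i : ℕ) < d := fun i => by split_ifs <;> simp_all
  simp only [cubes, Finset.mem_filter, Finset.mem_univ, true_and]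
  unfold Subcube.dim
  simp only [h]
  rw [Fin.card_filter_val_lt, min_eq_right hdn]

/-- The set whose supremum is `polyNum n d ℓ` is bounded, since a polychromatic coloring is
surjective as soon as there is a `d`-dimensional subcube. -/
theorem polyNum_bddAbove {n d : ℕ} (ℓ : ℕ) (hdn : d ≤ n) :
    BddAbove {m | ∃ χ : (Fin n → Option Bool) → Fin m,
      ∀ B ∈ cubes n d, ∀ c : Fin m, ∃ A ∈ cubes n ℓ, containedIn A B ∧ χ A = c} := by
  refine ⟨Fintype.card (Fin n → Option Bool), ?_⟩
  rintro m ⟨χ, hχ⟩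
  obtain ⟨B, hB⟩ := cubes_nonempty hdn
  have hsurj : Function.Surjective χ := fun c => by
    obtain ⟨A, -, -, hA⟩ := hχ B hB c
    exact ⟨A, hA⟩
  simpa using Fintype.card_le_of_surjective χ hsurj

/-- Theorem 1, lower bound:
`pc^(ℓ)(n,d) ≥ ⌈(d+1)/(ℓ+1)⌉^r · ⌊(d+1)/(ℓ+1)⌋^(ℓ+1-r)` where `0 < r ≤ ℓ+1` and
`r ≡ d+1 (mod ℓ+1)`.  (Note `⌈(d+1)/(ℓ+1)⌉ = (d+ℓ+1)/(ℓ+1)` in natural division.) -/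
theorem polyNum_lower_bound (n d ℓ r : ℕ) (hℓ : 1 ≤ ℓ) (hℓd : ℓ < d) (hdn : d < n)
    (hr0 : 0 < r) (hr1 : r ≤ ℓ + 1) (hrmod : r % (ℓ + 1) = (d + 1) % (ℓ + 1)) :
    ((d + 1 + ℓ) / (ℓ + 1)) ^ r * ((d + 1) / (ℓ + 1)) ^ (ℓ + 1 - r) ≤ polyNum n d ℓ := by
  set u := (d + 1 + ℓ) / (ℓ + 1) with hu
  set v := (d + 1) / (ℓ + 1) with hv
  have hv0 : 0 < v := Nat.div_pos (by omega) (by omega)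
  have huv : v ≤ u := Nat.div_le_div_right (by omega)
  -- Either `r` is the remainder of `d + 1`, or `r = ℓ + 1` and `ℓ + 1` divides `d + 1`.
  have hsum : r * u + (ℓ + 1 - r) * v = d + 1 := by
    have hdm : (ℓ + 1) * v + (d + 1) % (ℓ + 1) = d + 1 := Nat.div_add_mod _ _
    rcases Nat.lt_or_ge r (ℓ + 1) with h | h
    · rw [Nat.mod_eq_of_lt h] at hrmod
      have hu1 : u = v + 1 := by
        rw [hu, show d + 1 + ℓ = (r - 1) + (ℓ + 1) * (v + 1) by rw [mul_add]; omega,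
          Nat.add_mul_div_left _ _ (by omega), Nat.div_eq_of_lt (by omega), zero_add]
      obtain ⟨k, hk⟩ := Nat.exists_eq_add_of_lt h
      rw [hu1, ← hdm, ← hrmod, show ℓ + 1 - r = k + 1 by omega, hk]
      ring
    · obtain rfl : r = ℓ + 1 := by omega
      rw [Nat.mod_self] at hrmod
      have hu1 : u = v := by
        rw [hu, show d + 1 + ℓ = ℓ + (ℓ + 1) * v by omega,
          Nat.add_mul_div_left _ _ (by omega), Nat.div_eq_of_lt (by omega), zero_add]
      rw [hu1, Nat.sub_self, ← hdm, ← hrmod]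
      ring
  let m : ℕ → ℕ := fun j => if j < r then u else v
  have hm : ∀ j, 0 < m j := fun j => by
    dsimp only [m]
    split_ifs <;> omega
  have hr : (ℓ + 1) = r + (ℓ + 1 - r) := by omega
  have hms : ∑ j ∈ Finset.range (ℓ + 1), m j = d + 1 := by
    rw [← hsum, hr, Finset.sum_range_add, Finset.sum_congr rfl
      (fun j hj => if_pos (Finset.mem_range.1 hj))]
    simp [m]
  have hmp : ∏ j ∈ Finset.range (ℓ + 1), m j = u ^ r * v ^ (ℓ + 1 - r) := by
    rw [hr, Finset.prod_range_add, Finset.prod_congr rfl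
      (fun j hj => if_pos (Finset.mem_range.1 hj))]
    simp [m]
  rw [← hmp]
  exact le_csSup (polyNum_bddAbove ℓ hdn.le) (exists_polychromatic m hm hms)
end

section
/- (Theorem 1, upper bound.) For all integers d > ℓ ≥ 1 there exists N such that for every n ≥ N, pc^(ℓ)(n,d) ≤ C(d+1, ℓ+1); consequently the limit p_d^(ℓ) = lim_{n→∞} pc^(ℓ)(n,d) satisfies p_d^(ℓ) ≤ C(d+1, ℓ+1). -/
/-- The inductive step in Ramsey's theorem: if the theorem holds for `r`-subsets, then in a large
set one finds an `m`-subset `T` in which the color of an `(r + 1)`-subset depends only on its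
least element. -/
theorem exists_endHomogeneous {K : Type} (r : ℕ)
    (ih : ∀ m : ℕ, ∃ N : ℕ, ∀ (n : ℕ) (f : Finset (Fin n) → K) (V : Finset (Fin n)),
      N ≤ V.card → ∃ T ⊆ V, T.card = m ∧ ∃ c, ∀ S ⊆ T, S.card = r → f S = c) (m : ℕ) :
    ∃ N : ℕ, ∀ (n : ℕ) (f : Finset (Fin n) → K) (V : Finset (Fin n)), N ≤ V.card →
      ∃ T ⊆ V, T.card = m ∧ ∃ g : Fin n → K, ∀ a ∈ T, ∀ S ⊆ T, (∀ x ∈ S, a < x) →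
        S.card = r → f (insert a S) = g a := by
  induction m with
  | zero =>
    exact ⟨0, fun n f V _ => ⟨∅, by simp, by simp, fun _ => f ∅, by simp⟩⟩
  | succ m ihm =>
    obtain ⟨N₁, h₁⟩ := ihm
    obtain ⟨N₂, h₂⟩ := ih N₁
    refine ⟨N₂ + 1, fun n f V hV => ?_⟩
    have hne : V.Nonempty := Finset.card_pos.mp (by omega)
    set a := V.min' hne with ha
    have haV : a ∈ V := V.min'_mem hne
    obtain ⟨V', hV', hcard, c, hc⟩ := h₂ n (fun S => f (insert a S)) (V.erase a)
      (by rw [Finset.card_erase_of_mem haV]; omega)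
    obtain ⟨T, hT, hTm, g, hg⟩ := h₁ n f V' hcard.ge
    have haT : ∀ x ∈ T, a < x := fun x hx => by
      have := Finset.mem_erase.mp (hV' (hT hx))
      exact lt_of_le_of_ne (V.min'_le x this.2) this.1.symm
    have haT' : a ∉ T := fun h => lt_irrefl _ (haT a h)
    refine ⟨insert a T, ?_, by rw [Finset.card_insert_of_notMem haT', hTm],
      Function.update g a c, ?_⟩
    · exact Finset.insert_subset haV (hT.trans (hV'.trans (V.erase_subset a)))
    · intro b hb S hS hbS hSr
      have hab : a ≤ b := by
        rcases Finset.mem_insert.mp hb with rfl | hb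
        · exact le_rfl
        · exact (haT b hb).le
      have hST : S ⊆ T := fun x hx => by
        rcases Finset.mem_insert.mp (hS hx) with rfl | h
        · exact absurd (hbS _ hx) (not_lt.mpr hab)
        · exact h
      by_cases hba : b = a
      · rw [hba, Function.update_self]
        exact hc S (hST.trans hT) hSr
      · rw [Function.update_of_ne hba]
        exact hg b ((Finset.mem_insert.mp hb).resolve_left hba) S hST hbS hSr

/-- Ramsey's theorem for `r`-uniform hypergraphs with colors in a finite type `K`. -/
theorem ramsey {K : Type} [Finite K] (r : ℕ) : ∀ m : ℕ, ∃ N : ℕ, ∀ (n : ℕ)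
    (f : Finset (Fin n) → K) (V : Finset (Fin n)), N ≤ V.card →
      ∃ T ⊆ V, T.card = m ∧ ∃ c, ∀ S ⊆ T, S.card = r → f S = c := by
  classical
  have := Fintype.ofFinite K
  induction r with
  | zero =>
    intro m
    refine ⟨m, fun n f V hV => ?_⟩
    obtain ⟨T, hT, hTm⟩ := Finset.exists_subset_card_eq hV
    exact ⟨T, hT, hTm, f ∅, fun S _ hS => by rw [Finset.card_eq_zero.mp hS]⟩
  | succ r ih =>
    intro m
    obtain ⟨N, h⟩ := exists_endHomogeneous r ih (Fintype.card K * m)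
    refine ⟨N, fun n f V hV => ?_⟩
    obtain ⟨T, hT, hTm, g, hg⟩ := h n f V hV
    have : Nonempty K := ⟨f ∅⟩
    -- By pigeonhole, `m` of the least-element colors agree.
    obtain ⟨c, -, hc⟩ := Finset.exists_le_card_fiber_of_mul_le_card_of_maps_to
      (s := T) (t := Finset.univ) (f := g) (n := m) (fun _ _ => Finset.mem_univ _)
      Finset.univ_nonempty (by rw [hTm, Finset.card_univ])
    obtain ⟨U, hU, hUm⟩ := Finset.exists_subset_card_eq hc
    have hUT : U ⊆ T := hU.trans (Finset.filter_subset _ _)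
    refine ⟨U, hUT.trans hT, hUm, c, fun S hS hSr => ?_⟩
    have hne : S.Nonempty := Finset.card_pos.mp (by omega)
    have hmin := S.min'_mem hne
    have key := hg (S.min' hne) (hUT (hS hmin)) (S.erase (S.min' hne))
      ((S.erase_subset _).trans (hS.trans hUT))
      (fun x hx => S.min'_lt_of_mem_erase_min' hne hx)
      (by rw [Finset.card_erase_of_mem hmin]; omega)
    rw [Finset.insert_erase hmin] at key
    rw [key]
    exact (Finset.mem_filter.mp (hU (hS hmin))).2

/-- Ramsey's theorem for all subset sizes below `r` simultaneously. -/
theorem ramsey_lt {K : Type} [Finite K] (r : ℕ) : ∀ m : ℕ, ∃ N : ℕ, ∀ (n : ℕ)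
    (f : Finset (Fin n) → K) (V : Finset (Fin n)), N ≤ V.card →
      ∃ T ⊆ V, T.card = m ∧ ∃ F : ℕ → K, ∀ S ⊆ T, S.card < r → f S = F S.card := by
  induction r with
  | zero =>
    intro m
    refine ⟨m, fun n f V hV => ?_⟩
    obtain ⟨T, hT, hTm⟩ := Finset.exists_subset_card_eq hV
    exact ⟨T, hT, hTm, fun _ => f ∅, fun S _ hS => absurd hS (by omega)⟩
  | succ r ih =>
    intro m
    obtain ⟨N₁, h₁⟩ := ih m
    obtain ⟨N₂, h₂⟩ := ramsey (K := K) r N₁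
    refine ⟨N₂, fun n f V hV => ?_⟩
    obtain ⟨V', hV', hcard, c, hc⟩ := h₂ n f V hV
    obtain ⟨T, hT, hTm, F, hF⟩ := h₁ n f V' hcard.ge
    refine ⟨T, hT.trans hV', hTm, Function.update F r c, fun S hS hSr => ?_⟩
    by_cases h : S.card = r
    · rw [h, Function.update_self]
      exact hc S (hS.trans hT) h
    · rw [Function.update_of_ne h]
      exact hF S hS (by omega)

/-- The rank of `i` in `S`, counted from `0`: the number of elements of `S` below `i`. -/
def rankIn {n : ℕ} (S : Finset (Fin n)) (i : Fin n) : ℕ := (S.filter (· < i)).card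

theorem rankIn_lt_rankIn {n : ℕ} {S : Finset (Fin n)} {i j : Fin n} (hi : i ∈ S) (hij : i < j) :
    rankIn S i < rankIn S j := by
  refine Finset.card_lt_card (Finset.ssubset_iff_of_subset ?_ |>.mpr ⟨i, ?_, ?_⟩)
  · intro x hx
    rw [Finset.mem_filter] at hx ⊢
    exact ⟨hx.1, hx.2.trans hij⟩
  · exact Finset.mem_filter.mpr ⟨hi, hij⟩
  · simp

theorem rankIn_injOn {n : ℕ} (S : Finset (Fin n)) : Set.InjOn (rankIn S) S := by
  intro i hi j hj h
  rcases lt_trichotomy i j with hij | hij | hij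
  · exact absurd h (rankIn_lt_rankIn hi hij).ne
  · exact hij
  · exact absurd h (rankIn_lt_rankIn hj hij).ne'

theorem rankIn_lt_card {n : ℕ} {S : Finset (Fin n)} {i : Fin n} (hi : i ∈ S) :
    rankIn S i < S.card := by
  refine Finset.card_lt_card (Finset.ssubset_iff_of_subset (Finset.filter_subset _ _) |>.mpr
    ⟨i, hi, ?_⟩)
  simp

/-- The subcube that is `0` outside `S`, and on `S` is `∗` at the elements whose rank lies in `P`
and `1` at the others. -/
def rankCube {n : ℕ} (S : Finset (Fin n)) (P : Finset ℕ) : Fin n → Option Bool := fun i =>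
  if i ∈ S then (if rankIn S i ∈ P then none else some true) else some false

/-- Every `ℓ`-dimensional subcube is `rankCube S P`, with `S` its set of nonzero coordinates and
`P` an `ℓ`-set of ranks. -/
theorem exists_eq_rankCube {n ℓ : ℕ} {A : Fin n → Option Bool} (hA : A ∈ cubes n ℓ) :
    ∃ P ∈ Finset.powersetCard ℓ (Finset.range (Finset.univ.filter (A · ≠ some false)).card),
      A = rankCube (Finset.univ.filter (A · ≠ some false)) P := by
  set S := Finset.univ.filter (A · ≠ some false) with hS
  set Z := Finset.univ.filter (A · = none) with hZ
  have hZS : Z ⊆ S := fun i hi => by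
    simp only [hZ, hS, Finset.mem_filter, Finset.mem_univ, true_and] at hi ⊢
    simp [hi]
  have hZc : Z.card = ℓ := (Finset.mem_filter.mp hA).2
  refine ⟨Z.image (rankIn S), Finset.mem_powersetCard.mpr ⟨?_, ?_⟩, ?_⟩
  · intro p hp
    obtain ⟨i, hi, rfl⟩ := Finset.mem_image.mp hp
    exact Finset.mem_range.mpr (rankIn_lt_card (hZS hi))
  · rw [Finset.card_image_of_injOn ((rankIn_injOn S).mono (by exact_mod_cast hZS)), hZc]
  · funext i
    have hmem : i ∈ S → (rankIn S i ∈ Z.image (rankIn S) ↔ i ∈ Z) := fun hi => by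
      refine ⟨fun h => ?_, fun h => Finset.mem_image_of_mem _ h⟩
      obtain ⟨j, hj, hji⟩ := Finset.mem_image.mp h
      rwa [← rankIn_injOn S (hZS hj) hi hji]
    have hiS : i ∈ S ↔ A i ≠ some false := by simp [hS]
    have hiZ : i ∈ Z ↔ A i = none := by simp [hZ]
    unfold rankCube
    by_cases hi : i ∈ S
    · rw [if_pos hi]
      simp only [hmem hi, hiZ]
      rw [hiS] at hi
      rcases h : A i with _ | _ | _ <;> simp_all
    · rw [if_neg hi]
      exact not_not.mp (fun h => hi (hiS.mpr h))

/-- For a fixed number `q` of colors and large `n`, some `d`-cube contains `ℓ`-subcubes of at most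
`C(d + 1, ℓ + 1)` colors; so a polychromatic coloring with `q` colors forces
`q ≤ C(d + 1, ℓ + 1)`. -/
theorem exists_colors_le (d ℓ q : ℕ) : ∃ N : ℕ, ∀ n : ℕ, N ≤ n →
    ∀ χ : (Fin n → Option Bool) → Fin q,
      (∀ B ∈ cubes n d, ∀ c : Fin q, ∃ A ∈ cubes n ℓ, containedIn A B ∧ χ A = c) →
      q ≤ (d + 1).choose (ℓ + 1) := by
  classical
  obtain ⟨N, hN⟩ := ramsey_lt (K := (Finset.range d).powerset → Fin q) (d + 1) d
  refine ⟨N, fun n hn χ hχ => ?_⟩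
  obtain ⟨T, -, hTd, F, hF⟩ := hN n (fun S P => χ (rankCube S P)) Finset.univ (by simpa using hn)
  -- The color forced by a pair `(|S|, P)`; intersecting with `range d` changes nothing for the
  -- pairs that occur.
  let col : (_ : ℕ) × Finset ℕ → Fin q := fun x =>
    F x.1 ⟨x.2 ∩ Finset.range d, Finset.mem_powerset.mpr Finset.inter_subset_right⟩
  let pairs : Finset ((_ : ℕ) × Finset ℕ) :=
    (Finset.Icc ℓ d).sigma fun k => Finset.powersetCard ℓ (Finset.range k)
  have hsurj : (Finset.univ : Finset (Fin q)) ⊆ pairs.image col := by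
    intro c _
    obtain ⟨A, hA, hAB, rfl⟩ := hχ (fun i => if i ∈ T then none else some false)
      (Finset.mem_filter.mpr ⟨Finset.mem_univ _, by simp [Subcube.dim, hTd]⟩) c
    obtain ⟨P, hP, hAP⟩ := exists_eq_rankCube hA
    set S := Finset.univ.filter (A · ≠ some false) with hS
    have hST : S ⊆ T := fun i hi => by
      by_contra hiT
      exact (Finset.mem_filter.mp hi).2 (hAB i false (by simp [hiT]))
    have hSd : S.card ≤ d := hTd ▸ Finset.card_le_card hST
    obtain ⟨hPS, hPc⟩ := Finset.mem_powersetCard.mp hP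
    have hℓS : ℓ ≤ S.card := by
      simpa [hPc] using Finset.card_le_card hPS
    have hPd : P ∩ Finset.range d = P :=
      Finset.inter_eq_left.mpr (hPS.trans (Finset.range_subset_range.mpr hSd))
    refine Finset.mem_image.mpr ⟨⟨S.card, P⟩,
      Finset.mem_sigma.mpr ⟨Finset.mem_Icc.mpr ⟨hℓS, hSd⟩, hP⟩, ?_⟩
    have := congrFun (hF S hST (by omega))
      ⟨P ∩ Finset.range d, Finset.mem_powerset.mpr Finset.inter_subset_right⟩
    simp only [col]
    rw [← this]
    simp only [hPd]
    rw [← hAP]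
  calc q = (Finset.univ : Finset (Fin q)).card := by simp
    _ ≤ pairs.card := (Finset.card_le_card hsurj).trans Finset.card_image_le
    _ = ∑ k ∈ Finset.Icc ℓ d, k.choose ℓ := by simp [pairs, Finset.card_sigma]
    _ = (d + 1).choose (ℓ + 1) := Nat.sum_Icc_choose d ℓ

/-- Theorem 1, upper bound: for `d > ℓ ≥ 1` there exists `N` such that
`pc^(ℓ)(n,d) ≤ C(d+1, ℓ+1)` for all `n ≥ N`. -/
theorem polyNum_upper_bound (d ℓ : ℕ) (hℓ : 1 ≤ ℓ) (hℓd : ℓ < d) :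
    ∃ N : ℕ, ∀ n : ℕ, N ≤ n → polyNum n d ℓ ≤ (d + 1).choose (ℓ + 1) := by
  obtain ⟨N, hN⟩ := exists_colors_le d ℓ ((d + 1).choose (ℓ + 1) + 1)
  refine ⟨N, fun n hn => csSup_le' ?_⟩
  rintro m ⟨χ, hχ⟩
  by_contra! hm
  -- Merge all colors from `C(d + 1, ℓ + 1) + 1` on into color `0`.
  have := hN n hn (fun A => if h : (χ A : ℕ) < (d + 1).choose (ℓ + 1) + 1 then ⟨χ A, h⟩ else 0)
    (fun B hB c => by
      obtain ⟨A, hA, hAB, hAc⟩ := hχ B hB (Fin.castLE hm c)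
      refine ⟨A, hA, hAB, ?_⟩
      have hc : (χ A : ℕ) = c := by rw [hAc, Fin.val_castLE]
      have hlt : (χ A : ℕ) < (d + 1).choose (ℓ + 1) + 1 := hc ▸ c.isLt
      rw [dif_pos hlt]
      exact Fin.ext hc)
  omega
end

section
/- (Theorem 3.) Fix integers s > r ≥ 2. For every ε > 0 there exists N such that for all n ≥ N, writing d = n - r and ℓ = n - s, one has c^(ℓ)(n,d) ≤ (1+ε) · ⌈ r·log(n-ℓ) / log( r^r / (r^r - r!) ) ⌉ / (2^(d-ℓ)·C(d,ℓ)), where log denotes the natural logarithm; equivalently, f^(ℓ)(n,d) · 2^(d-ℓ) · C(d,ℓ) ≤ (1+ε) · ⌈ r·log(n-ℓ) / log( r^r / (r^r - r!) ) ⌉ · 2^(n-ℓ) · C(n,ℓ). -/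
open Finset in
/-- The number of words in `Option Bool` over an index type `ι` with exactly `k` entries `none`. -/
lemma card_none_eq {ι : Type*} [Fintype ι] [DecidableEq ι] (k : ℕ) :
    #{f : ι → Option Bool | #{i | f i = none} = k}
      = 2 ^ (Fintype.card ι - k) * (Fintype.card ι).choose k := by
  have key : ∀ Z ∈ powersetCard k (univ : Finset ι),
      #{f : ι → Option Bool | ({i | f i = none} : Finset ι) = Z} = 2 ^ (Fintype.card ι - k) := by
    intro Z hZ
    have hZk : #Z = k := (mem_powersetCard.1 hZ).2
    have : ({f : ι → Option Bool | ({i | f i = none} : Finset ι) = Z} : Finset _)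
        = Fintype.piFinset (fun i => if i ∈ Z then {none} else {some true, some false}) := by
      ext f
      simp only [mem_filter, mem_univ, true_and, Fintype.mem_piFinset, Finset.ext_iff]
      refine forall_congr' fun i => ?_
      by_cases hi : i ∈ Z
      · simp [hi]
      · rcases h : f i with _ | _ | _ <;> simp [hi]
    rw [this, Fintype.card_piFinset]
    have h2 : ∀ i, #(if i ∈ Z then ({none} : Finset (Option Bool)) else {some true, some false})
        = if i ∈ Z then 1 else 2 := by
      intro i; split_ifs <;> simp
    simp only [h2]
    rw [prod_ite]
    simp only [prod_const, one_pow, one_mul]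
    congr 1
    rw [← hZk, ← card_compl]
    congr 1
    ext i; simp
  rw [card_eq_sum_card_fiberwise
    (f := fun f : ι → Option Bool => ({i | f i = none} : Finset ι))
    (t := powersetCard k univ)]
  · calc _ = ∑ Z ∈ powersetCard k (univ : Finset ι), 2 ^ (Fintype.card ι - k) := by
          refine sum_congr rfl fun Z hZ => ?_
          rw [← key Z hZ]
          congr 1
          ext f
          simp only [mem_filter, mem_univ, true_and, and_iff_right_iff_imp]
          rintro rfl
          exact (mem_powersetCard.1 hZ).2
      _ = _ := by simp [card_powersetCard, mul_comm]
  · intro f hf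
    simp only [coe_filter, mem_univ, true_and, Set.mem_ofPred_eq] at hf
    simp [mem_powersetCard, hf]

open Finset in
lemma mem_cubes {n k : ℕ} {A : Fin n → Option Bool} :
    A ∈ cubes n k ↔ #{i | A i = none} = k := by
  unfold cubes
  rw [mem_filter_univ, Subcube.dim]

lemma card_cubes (n k : ℕ) : (cubes n k).card = 2 ^ (n - k) * n.choose k := by
  have := card_none_eq (ι := Fin n) k
  rwa [Fintype.card_fin] at this

open Finset in
/-- Filling in the free coordinates of a `d`-cube `B` by words with `k` stars produces distinct
`k`-subcubes of `B`. -/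
lemma card_le_card_contained (n d k : ℕ) (B : Fin n → Option Bool) (hB : B ∈ cubes n d) :
    2 ^ (d - k) * d.choose k ≤ #{A ∈ cubes n k | containedIn A B} := by
  have hd : Fintype.card {i // B i = none} = d := by
    rw [Fintype.card_subtype]
    exact mem_cubes.1 hB
  have h := card_none_eq (ι := {i // B i = none}) k
  rw [hd] at h
  rw [← h]
  refine card_le_card_of_injOn
    (fun g i => if h : B i = none then g ⟨i, h⟩ else B i) ?_ ?_
  · intro g hg
    simp only [coe_filter, mem_univ, true_and, Set.mem_ofPred_eq] at hg
    simp only [coe_filter, Set.mem_ofPred_eq, mem_cubes]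
    refine ⟨?_, ?_⟩
    · rw [← hg]
      symm
      refine card_bij (fun i _ => i.1) ?_ ?_ ?_
      · rintro ⟨i, hi⟩ h
        simp only [mem_filter, mem_univ, true_and] at h ⊢
        simpa [hi] using h
      · intro a _ b _ hab
        exact Subtype.ext hab
      · intro i hi
        simp only [mem_filter, mem_univ, true_and] at hi
        by_cases hBi : B i = none
        · exact ⟨⟨i, hBi⟩, by simpa [hBi] using hi, rfl⟩
        · simp [hBi] at hi
    · intro i b hb
      simp [hb]
  · intro g _ g' _ hgg
    funext ⟨i, hi⟩
    have := congrFun hgg i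
    simpa [hi] using this

open Finset in
/-- Greedy covering: if each `b ∈ ℬ` is covered by at least `D` elements of `𝒜`, then `t` elements
of `𝒜` can be chosen to leave at most a `(1 - D/|𝒜|)^t` fraction of `ℬ` uncovered. -/
lemma exists_greedy {α β : Type*} [DecidableEq α] [DecidableEq β] (𝒜 : Finset α) (ℬ : Finset β)
    (R : α → β → Prop) [∀ a b, Decidable (R a b)] (D : ℕ)
    (h𝒜 : 0 < #𝒜) (hD𝒜 : D ≤ #𝒜)
    (hD : ∀ b ∈ ℬ, D ≤ #{a ∈ 𝒜 | R a b}) (t : ℕ) :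
    ∃ S ⊆ 𝒜, #S ≤ t ∧
      (#{b ∈ ℬ | ∀ a ∈ S, ¬ R a b} : ℝ) ≤ #ℬ * (1 - (D : ℝ) / #𝒜) ^ t := by
  induction t with
  | zero => exact ⟨∅, by simp, by simp, by simp⟩
  | succ t ih =>
    obtain ⟨S, hS, hSt, hle⟩ := ih
    set T := {b ∈ ℬ | ∀ a ∈ S, ¬ R a b} with hT
    have hM : (0 : ℝ) < #𝒜 := by exact_mod_cast h𝒜
    -- averaging over `𝒜` the number of uncovered elements that are hit
    obtain ⟨a, ha, hav⟩ : ∃ a ∈ 𝒜, (D : ℝ) * #T / #𝒜 ≤ (#{b ∈ T | R a b} : ℝ) := by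
      apply exists_le_of_sum_le (card_pos.1 h𝒜)
      rw [sum_const, nsmul_eq_mul, mul_div_cancel₀ _ hM.ne']
      have h1 := sum_card_bipartiteAbove_eq_sum_card_bipartiteBelow (s := 𝒜) (t := T) R
      have h2 : D * #T ≤ ∑ b ∈ T, #{a ∈ 𝒜 | R a b} := by
        rw [mul_comm, ← smul_eq_mul, ← sum_const]
        exact sum_le_sum fun b hb => hD b (mem_filter.1 hb).1
      have h3 : D * #T ≤ ∑ a ∈ 𝒜, #{b ∈ T | R a b} := h2.trans h1.ge
      exact_mod_cast h3
    refine ⟨insert a S, insert_subset ha hS, (card_insert_le _ _).trans (by omega), ?_⟩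
    have hsplit : {b ∈ ℬ | ∀ a' ∈ insert a S, ¬ R a' b} = {b ∈ T | ¬ R a b} := by
      ext b
      simp only [hT, mem_filter, forall_mem_insert]
      tauto
    have hc := card_filter_add_card_filter_not (s := T) (fun b => R a b)
    have hc' : (#{b ∈ T | R a b} : ℝ) + #{b ∈ T | ¬ R a b} = #T := by exact_mod_cast hc
    have hfac : (0 : ℝ) ≤ 1 - (D : ℝ) / #𝒜 := by
      rw [sub_nonneg, div_le_one hM]
      exact_mod_cast hD𝒜
    rw [hsplit]
    calc (#{b ∈ T | ¬ R a b} : ℝ) ≤ #T * (1 - (D : ℝ) / #𝒜) := by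
          have : (D : ℝ) * #T / #𝒜 = #T * ((D : ℝ) / #𝒜) := by ring
          rw [this] at hav
          linarith
      _ ≤ (#ℬ * (1 - (D : ℝ) / #𝒜) ^ t) * (1 - (D : ℝ) / #𝒜) := by gcongr
      _ = _ := by ring

open Finset in
/-- The greedy bound `W * (1 + log a) + 1` with `W = |𝒜| / D`, where `a = |ℬ| * D / |𝒜|` is the
average number of elements of `ℬ` covered by an element of `𝒜`. -/
lemma exists_cover {α β : Type*} [DecidableEq α] [DecidableEq β] (𝒜 : Finset α) (ℬ : Finset β)
    (R : α → β → Prop) [∀ a b, Decidable (R a b)] (D a : ℕ)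
    (hD0 : 0 < D) (ha : 0 < a) (hD𝒜 : D ≤ #𝒜)
    (hD : ∀ b ∈ ℬ, D ≤ #{a ∈ 𝒜 | R a b}) (hcount : #ℬ * D = #𝒜 * a) :
    ∃ S ⊆ 𝒜, (∀ b ∈ ℬ, ∃ a ∈ S, R a b) ∧
      (#S : ℝ) ≤ (#𝒜 / D : ℝ) * (1 + Real.log a) + 1 := by
  have hM0 : 0 < #𝒜 := hD0.trans_le hD𝒜
  have hM : (0 : ℝ) < #𝒜 := by exact_mod_cast hM0
  have hDr : (0 : ℝ) < D := by exact_mod_cast hD0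
  have har : (1 : ℝ) ≤ a := by exact_mod_cast ha
  have hlog : 0 ≤ Real.log a := Real.log_nonneg har
  set t := ⌈(#𝒜 / D : ℝ) * Real.log a⌉₊ with ht
  obtain ⟨S, hS, hSt, hle⟩ := exists_greedy 𝒜 ℬ R D hM0 hD𝒜 hD t
  set T := {b ∈ ℬ | ∀ a ∈ S, ¬ R a b} with hT
  have hex : ∀ b ∈ ℬ, ∃ a ∈ 𝒜, R a b := by
    intro b hb
    obtain ⟨x, hx⟩ := card_pos.1 (hD0.trans_le (hD b hb))
    exact ⟨x, (mem_filter.1 hx).1, (mem_filter.1 hx).2⟩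
  have : Nonempty α := ⟨(card_pos.1 hM0).choose⟩
  choose! g hg𝒜 hgR using hex
  refine ⟨S ∪ T.image g, union_subset hS ?_, ?_, ?_⟩
  · intro x hx
    obtain ⟨b, hb, rfl⟩ := mem_image.1 hx
    exact hg𝒜 b (mem_filter.1 hb).1
  · intro b hb
    by_cases h : ∃ a ∈ S, R a b
    · obtain ⟨x, hx, hxb⟩ := h
      exact ⟨x, mem_union_left _ hx, hxb⟩
    · push Not at h
      exact ⟨g b, mem_union_right _ (mem_image_of_mem _ (mem_filter.2 ⟨hb, h⟩)), hgR b hb⟩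
  · have hcard : (#(S ∪ T.image g) : ℝ) ≤ t + #T := by
      have : #(S ∪ T.image g) ≤ t + #T :=
        (card_union_le _ _).trans (add_le_add hSt card_image_le)
      exact_mod_cast this
    have htle : (t : ℝ) ≤ (#𝒜 / D : ℝ) * Real.log a + 1 :=
      (Nat.ceil_lt_add_one (by positivity)).le
    have htge : (#𝒜 / D : ℝ) * Real.log a ≤ t := Nat.le_ceil _
    have hfac : (0 : ℝ) ≤ 1 - (D : ℝ) / #𝒜 := by
      rw [sub_nonneg, div_le_one hM]
      exact_mod_cast hD𝒜
    have hpow : (1 - (D : ℝ) / #𝒜) ^ t ≤ (a : ℝ)⁻¹ := by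
      calc (1 - (D : ℝ) / #𝒜) ^ t ≤ (Real.exp (-((D : ℝ) / #𝒜))) ^ t := by
            gcongr
            exact Real.one_sub_le_exp_neg _
        _ = Real.exp (-((D : ℝ) / #𝒜 * t)) := by
            rw [← Real.exp_nat_mul]; ring_nf
        _ ≤ Real.exp (-Real.log a) := by
            rw [Real.exp_le_exp, neg_le_neg_iff]
            calc Real.log a = (D : ℝ) / #𝒜 * ((#𝒜 / D : ℝ) * Real.log a) := by field_simp
              _ ≤ _ := by gcongr
        _ = (a : ℝ)⁻¹ := by rw [Real.exp_neg, Real.exp_log (by linarith)]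
    have hcr : (#ℬ : ℝ) * D = #𝒜 * a := by exact_mod_cast hcount
    have hT' : (#T : ℝ) ≤ #𝒜 / D := by
      calc (#T : ℝ) ≤ #ℬ * (a : ℝ)⁻¹ := hle.trans (by gcongr)
        _ = #𝒜 / D := by
          have : (a : ℝ) ≠ 0 := by positivity
          field_simp
          linarith
    linarith

lemma two_mul_factorial_le_pow_self (r : ℕ) (hr : 2 ≤ r) : 2 * r.factorial ≤ r ^ r := by
  induction r, hr using Nat.le_induction with
  | base => decide
  | succ m hm ih =>
    rw [Nat.factorial_succ, pow_succ]
    calc 2 * ((m + 1) * m.factorial) = (2 * m.factorial) * (m + 1) := by ring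
      _ ≤ (m + 1) ^ m * (m + 1) := by
        gcongr
        exact ih.trans (Nat.pow_le_pow_left (by omega) _)

/-- The comparison between the greedy bound and the stated bound. -/
lemma five_fourths_add_log_choose_le (r s : ℕ) (hr : 2 ≤ r) (hrs : r < s) :
    5 / 4 + Real.log (s.choose r) ≤ (r : ℝ) * Real.log s /
      Real.log ((r : ℝ) ^ r / ((r : ℝ) ^ r - (Nat.factorial r : ℝ))) := by
  have hs3 : (3 : ℝ) ≤ s := by exact_mod_cast (show 3 ≤ s by omega)
  have hr2 : (2 : ℝ) ≤ r := by exact_mod_cast hr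
  have hlogs : 1 ≤ Real.log s := by
    rw [Real.le_log_iff_exp_le (by linarith)]
    linarith [Real.exp_one_lt_d9]
  have hfac : (2 : ℝ) * r.factorial ≤ (r : ℝ) ^ r := by
    exact_mod_cast two_mul_factorial_le_pow_self r hr
  have hf2 : (2 : ℝ) ≤ r.factorial := by
    exact_mod_cast hr.trans (Nat.self_le_factorial r)
  have hden : (0 : ℝ) < (r : ℝ) ^ r - r.factorial := by linarith
  set q := (r : ℝ) ^ r / ((r : ℝ) ^ r - (Nat.factorial r : ℝ)) with hq
  have hq1 : 1 < q := by rw [hq, one_lt_div hden]; linarith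
  have hq2 : q ≤ 2 := by rw [hq, div_le_iff₀ hden]; linarith
  have hlq0 : 0 < Real.log q := Real.log_pos hq1
  have hlq2 : Real.log q ≤ Real.log 2 := Real.log_le_log (by linarith) hq2
  have hchoose : Real.log (s.choose r) ≤ r * Real.log s - Real.log 2 := by
    rw [← Real.log_pow, ← Real.log_div (by positivity) (by norm_num)]
    apply Real.log_le_log
    · exact_mod_cast Nat.choose_pos hrs.le
    · calc (s.choose r : ℝ) ≤ (s : ℝ) ^ r / r.factorial := Nat.choose_le_pow_div r s
        _ ≤ (s : ℝ) ^ r / 2 := by gcongr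
  have hX : 2 ≤ (r : ℝ) * Real.log s := by nlinarith
  have h2lo := Real.log_two_gt_d9
  have h2hi := Real.log_two_lt_d9
  rw [le_div_iff₀ hlq0]
  have hpos : 0 ≤ 5 / 4 + ((r : ℝ) * Real.log s - Real.log 2) := by linarith
  calc (5 / 4 + Real.log (s.choose r)) * Real.log q
      ≤ (5 / 4 + ((r : ℝ) * Real.log s - Real.log 2)) * Real.log 2 := by
        gcongr
    _ ≤ (r : ℝ) * Real.log s := by nlinarith

/-- Theorem 3: for fixed `s > r ≥ 2`, with `d = n - r` and `ℓ = n - s`,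
`f^(ℓ)(n,d) · 2^(d-ℓ) · C(d,ℓ) ≤ (1+ε) · ⌈r·log(n-ℓ) / log(r^r/(r^r - r!))⌉ · 2^(n-ℓ) · C(n,ℓ)`
for all sufficiently large `n`. -/
theorem coverNum_asymptotic_upper_bound (r s : ℕ) (hr : 2 ≤ r) (hrs : r < s)
    (ε : ℝ) (hε : 0 < ε) :
    ∃ N : ℕ, ∀ n : ℕ, N ≤ n →
      (coverNum n (n - r) (n - s) : ℝ) * 2 ^ (n - r - (n - s)) * ((n - r).choose (n - s)) ≤
        (1 + ε) *
          ((⌈((r : ℝ) * Real.log ((n - (n - s) : ℕ) : ℝ)) /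
              Real.log ((r : ℝ) ^ r / ((r : ℝ) ^ r - (Nat.factorial r : ℝ)))⌉ : ℤ) : ℝ) *
          (2 ^ (n - (n - s)) * (n.choose (n - s))) := by
  refine ⟨s, fun n hn => ?_⟩
  have e1 : n - (n - s) = s := by omega
  have e2 : n - r - (n - s) = s - r := by omega
  have hch1 : (n - r).choose (n - s) = (n - r).choose (s - r) := by
    rw [← Nat.choose_symm (show s - r ≤ n - r by omega)]
    congr 1; omega
  have hch2 : n.choose (n - s) = n.choose s := Nat.choose_symm hn
  rw [e1, e2]
  set D := 2 ^ (s - r) * (n - r).choose (n - s) with hDdef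
  set M := 2 ^ s * n.choose (n - s) with hMdef
  have hcardA : (cubes n (n - s)).card = M := by rw [card_cubes, e1]
  have hcardB : (cubes n (n - r)).card = 2 ^ r * n.choose r := by
    rw [card_cubes, Nat.choose_symm (by omega), show n - (n - r) = r by omega]
  have hD0 : 0 < D := by
    have := Nat.choose_pos (show n - s ≤ n - r by omega)
    positivity
  have ha0 : 0 < s.choose r := Nat.choose_pos hrs.le
  have hcount : (cubes n (n - r)).card * D = (cubes n (n - s)).card * s.choose r := by
    rw [hcardA, hcardB, hDdef, hMdef, hch1, hch2]
    have h := Nat.choose_mul (n := n) (k := s) (s := r) hrs.le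
    have hp : 2 ^ s = 2 ^ r * 2 ^ (s - r) := by rw [← pow_add]; congr 1; omega
    rw [hp]
    calc 2 ^ r * n.choose r * (2 ^ (s - r) * (n - r).choose (s - r))
        = 2 ^ r * 2 ^ (s - r) * (n.choose r * (n - r).choose (s - r)) := by ring
      _ = 2 ^ r * 2 ^ (s - r) * n.choose s * s.choose r := by rw [← h]; ring
  have h4 : 4 * D ≤ M := by
    have h1 : 2 ^ r * n.choose r * D = M * s.choose r := by rw [← hcardB, ← hcardA, hcount]
    have h2 : 2 ^ 2 ≤ 2 ^ r := Nat.pow_le_pow_right (by norm_num) hr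
    refine Nat.le_of_mul_le_mul_right ?_ ha0
    rw [← h1]
    calc 4 * D * s.choose r = 2 ^ 2 * s.choose r * D := by ring
      _ ≤ 2 ^ r * n.choose r * D := by
        gcongr
  obtain ⟨S, hS, hcov, hcard⟩ := exists_cover (cubes n (n - s)) (cubes n (n - r)) containedIn D
    (s.choose r) hD0 ha0 (by rw [hcardA]; omega)
    (fun B hB => by
      have := card_le_card_contained n (n - r) (n - s) B hB
      rwa [e2] at this) hcount
  have hf : (coverNum n (n - r) (n - s) : ℝ) ≤ S.card := by
    have : coverNum n (n - r) (n - s) ≤ S.card := Nat.sInf_le ⟨S, ⟨hS, hcov⟩, rfl⟩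
    exact_mod_cast this
  have hDr : (0 : ℝ) < D := by exact_mod_cast hD0
  have h4r : (4 : ℝ) * D ≤ M := by exact_mod_cast h4
  have hDcast : (2 : ℝ) ^ (s - r) * ((n - r).choose (n - s)) = D := by rw [hDdef]; push_cast; ring
  have hMcast : (2 : ℝ) ^ s * (n.choose (n - s)) = M := by rw [hMdef]; push_cast; ring
  have hkey := five_fourths_add_log_choose_le r s hr hrs
  have hceil := Int.le_ceil (((r : ℝ) * Real.log s) /
      Real.log ((r : ℝ) ^ r / ((r : ℝ) ^ r - (Nat.factorial r : ℝ))))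
  set K : ℝ := ((⌈((r : ℝ) * Real.log s) /
      Real.log ((r : ℝ) ^ r / ((r : ℝ) ^ r - (Nat.factorial r : ℝ)))⌉ : ℤ) : ℝ) with hK
  have hK' : 5 / 4 + Real.log (s.choose r) ≤ K := hkey.trans hceil
  have hlog : 0 ≤ Real.log (s.choose r) := Real.log_natCast_nonneg _
  have hMr : (0 : ℝ) < M := by linarith
  rw [mul_assoc, hDcast, hMcast]
  rw [hcardA] at hcard
  calc (coverNum n (n - r) (n - s) : ℝ) * D
      ≤ ((M / D : ℝ) * (1 + Real.log (s.choose r)) + 1) * D := by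
        gcongr
        exact hf.trans hcard
    _ = M * (1 + Real.log (s.choose r)) + D := by field_simp
    _ ≤ (5 / 4 + Real.log (s.choose r)) * M := by linarith
    _ ≤ K * M := by gcongr
    _ ≤ (1 + ε) * K * M := by
        gcongr
        nlinarith
end

section
/- (Theorem 4.) For all integers n and ℓ with n - 1 > ℓ ≥ 1, the minimum size of an (n-1, ℓ)-covering set of Q_n equals ⌈2n/(n-ℓ)⌉, i.e. f^(ℓ)(n, n-1) = ⌈2n/(n-ℓ)⌉; equivalently, c^(ℓ)(n, n-1) = ⌈2n/(n-ℓ)⌉ / (2^(n-ℓ)·C(n,ℓ)). -/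
lemma card_fixed_add_dim {n : ℕ} (A : Fin n → Option Bool) :
    (Finset.univ.filter (fun i => A i ≠ none)).card + Subcube.dim A = n := by
  have h := Finset.card_filter_add_card_filter_not (s := (Finset.univ : Finset (Fin n)))
    (fun i => A i = none)
  rw [Finset.card_univ, Fintype.card_fin] at h
  unfold Subcube.dim
  simp only [ne_eq]
  omega

lemma card_literals_le {n : ℕ} (A : Fin n → Option Bool) :
    (Finset.univ.filter (fun x : Fin n × Bool => A x.1 = some x.2)).card ≤ n - Subcube.dim A := by
  have h := card_fixed_add_dim A
  have h2 : (Finset.univ.filter (fun x : Fin n × Bool => A x.1 = some x.2)).card ≤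
      (Finset.univ.filter (fun i => A i ≠ none)).card := by
    apply Finset.card_le_card_of_injOn Prod.fst
    · intro x hx
      simp only [Finset.coe_filter, Finset.mem_univ, true_and, Set.mem_ofPred_eq] at hx ⊢
      simp [hx]
    · rintro ⟨i, b⟩ hx ⟨j, c⟩ hy hij
      simp only [Finset.coe_filter, Finset.mem_univ, true_and, Set.mem_ofPred_eq] at hx hy hij
      subst hij
      rw [hx] at hy
      simpa using hy
  omega

/-- Counting literals: the members of a cover jointly fix each of the `2 n` literals. -/
lemma two_mul_le_of_isCover {n ℓ : ℕ} {S : Finset (Fin n → Option Bool)}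
    (hS : IsCover n (n - 1) ℓ S) : 2 * n ≤ S.card * (n - ℓ) := by
  have hsub : (Finset.univ : Finset (Fin n × Bool)) ⊆
      S.biUnion (fun A => Finset.univ.filter (fun x : Fin n × Bool => A x.1 = some x.2)) := by
    rintro ⟨i, b⟩ -
    have hB : Function.update (fun _ => none) i (some b) ∈ cubes n (n - 1) := by
      have h := card_fixed_add_dim (Function.update (fun _ : Fin n => none) i (some b))
      have h1 : Finset.univ.filter
          (fun j => Function.update (fun _ : Fin n => none) i (some b) j ≠ none) = {i} := by
        ext j
        by_cases hj : j = i
        · subst hj; simp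
        · simp [hj]
      rw [h1, Finset.card_singleton] at h
      simp only [cubes, Finset.mem_filter, Finset.mem_univ, true_and]
      omega
    obtain ⟨A, hA, hAB⟩ := hS.2 _ hB
    simp only [Finset.mem_biUnion, Finset.mem_filter, Finset.mem_univ, true_and]
    exact ⟨A, hA, hAB i b (by simp)⟩
  have hc := (Finset.card_le_card hsub).trans
    (Finset.card_biUnion_le_card_mul S _ (n - ℓ) (fun A hA => ?_))
  · simpa [mul_comm] using hc
  · have hA' := hS.1 hA
    simp only [cubes, Finset.mem_filter, Finset.mem_univ, true_and] at hA'
    exact hA' ▸ card_literals_le A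

/-- The arc of `k` consecutive literals starting at position `a` of the cyclic order, where
position `p` carries the literal on coordinate `p % n` with value `true` iff `p / n` is odd.
For `i : Fin n`, the first position `p ≥ a` with `p % n = i` is `a + (i - a) % n`. The subtraction
takes place in `ℤ`, where `%` is nonnegative. -/
def arc (n k a : ℕ) (i : Fin n) : Option Bool :=
  if (((i : ℤ) - a) % n).toNat < k then
    some (decide ((a + (((i : ℤ) - a) % n).toNat) / n % 2 = 1))
  else none

/-- The coordinates fixed by an arc correspond to its `k` positions via the offset from `a`. -/
lemma dim_arc {n k : ℕ} (a : ℕ) (hn : 0 < n) (hk : k ≤ n) :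
    Subcube.dim (arc n k a) = n - k := by
  have h := card_fixed_add_dim (arc n k a)
  have hn' : (n : ℤ) ≠ 0 := by omega
  have hc : (Finset.univ.filter (fun i => arc n k a i ≠ none)).card = (Finset.range k).card := by
    refine Finset.card_nbij' (fun i : Fin n => (((i : ℤ) - a) % n).toNat)
      (fun t => ⟨(a + t) % n, Nat.mod_lt _ hn⟩) ?_ ?_ ?_ ?_
    · intro i hi
      simpa [arc] using hi
    · intro t ht
      have ht' : t < k := by simpa using ht
      have : ((t : ℤ) % n).toNat = t := by
        rw [Int.emod_eq_of_lt (by omega) (by omega), Int.toNat_natCast]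
      simp [arc, this, ht']
    · intro i hi
      ext
      have h0 := Int.emod_nonneg ((i : ℤ) - a) hn'
      zify
      rw [Int.toNat_of_nonneg h0, Int.add_emod_emod, add_sub_cancel]
      exact Int.emod_eq_of_lt (by omega) (by omega)
    · intro t ht
      have ht' : t < k := by simpa using ht
      simp only [Int.natCast_emod, Nat.cast_add]
      rw [Int.emod_sub_emod, add_sub_cancel_left, Int.emod_eq_of_lt (by omega) (by omega)]
      simp
  rw [hc, Finset.card_range] at h
  omega

/-- The arcs starting at `0, k, 2 * k, …` cover every literal once they cover all positions
below `2 * n`. -/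
lemma exists_isCover {n ℓ m : ℕ} (hℓ : ℓ < n) (hm : 2 * n ≤ m * (n - ℓ)) :
    ∃ S : Finset (Fin n → Option Bool), IsCover n (n - 1) ℓ S ∧ S.card ≤ m := by
  set k := n - ℓ with hk
  have hk0 : 0 < k := by omega
  refine ⟨(Finset.range m).image (fun j => arc n k (j * k)), ⟨?_, ?_⟩, ?_⟩
  · intro A hA
    obtain ⟨j, -, rfl⟩ := Finset.mem_image.1 hA
    simp only [cubes, Finset.mem_filter, Finset.mem_univ, true_and]
    rw [dim_arc _ (by omega) (by omega)]
    omega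
  · intro B hB
    simp only [cubes, Finset.mem_filter, Finset.mem_univ, true_and] at hB
    have h1 := card_fixed_add_dim B
    have h2 : (Finset.univ.filter (fun i => B i ≠ none)).card = 1 := by omega
    obtain ⟨i, hi⟩ := Finset.card_eq_one.1 h2
    have hmem : ∀ j, B j ≠ none ↔ j = i := fun j => by
      simpa using Finset.ext_iff.1 hi j
    obtain ⟨b, hb⟩ := Option.ne_none_iff_exists'.1 ((hmem i).2 rfl)
    -- `p` is the position of the literal `(i, b)`; it lies in the arc with index `p / k`.
    obtain ⟨p, hp2, hpi, hpb⟩ : ∃ p < 2 * n, (p : ℤ) % n = i ∧ decide (p / n % 2 = 1) = b := by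
      have hin := i.2
      cases b
      · refine ⟨i, by omega, Int.emod_eq_of_lt (by omega) (by omega), ?_⟩
        simp [Nat.div_eq_of_lt hin]
      · refine ⟨i + n, by omega, ?_, ?_⟩
        · push_cast
          rw [Int.add_emod_right]
          exact Int.emod_eq_of_lt (by omega) (by omega)
        · rw [Nat.add_div_right _ (by omega), Nat.div_eq_of_lt hin]
          simp
    refine ⟨arc n k (p / k * k), Finset.mem_image.2 ⟨p / k, ?_, rfl⟩, ?_⟩
    · rw [Finset.mem_range, Nat.div_lt_iff_lt_mul hk0]
      omega
    · intro j c hj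
      obtain rfl := (hmem j).1 (by simp [hj])
      obtain rfl : b = c := by simpa [hb] using hj
      have hdm := Nat.div_add_mod' p k
      have hlt := Nat.mod_lt p hk0
      have hr : (((j : ℤ) - (p / k * k : ℕ)) % n).toNat = p % k := by
        rw [← hpi, Int.emod_sub_emod,
          show (p : ℤ) - (p / k * k : ℕ) = (p % k : ℕ) by omega,
          Int.emod_eq_of_lt (by omega) (by omega), Int.toNat_natCast]
      unfold arc
      rw [hr, if_pos hlt, hdm, hpb]
  · exact Finset.card_image_le.trans (by simp)

/-- Theorem 4: `f^(ℓ)(n, n-1) = ⌈2n/(n-ℓ)⌉` for `n - 1 > ℓ ≥ 1`. -/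
theorem coverNum_codim_one (n ℓ : ℕ) (hℓ : 1 ≤ ℓ) (hℓn : ℓ < n - 1) :
    (coverNum n (n - 1) ℓ : ℤ) = ⌈(2 * n : ℚ) / ((n - ℓ : ℕ) : ℚ)⌉ := by
  have hk : (0 : ℚ) < ((n - ℓ : ℕ) : ℚ) := by
    exact_mod_cast (by omega : 0 < n - ℓ)
  rw [← Int.natCast_ceil_eq_ceil (by positivity), Nat.cast_inj]
  have hm : 2 * n ≤ ⌈(2 * n : ℚ) / ((n - ℓ : ℕ) : ℚ)⌉₊ * (n - ℓ) := by
    have h := (div_le_iff₀ hk).1 (Nat.le_ceil ((2 * n : ℚ) / ((n - ℓ : ℕ) : ℚ)))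
    exact_mod_cast h
  obtain ⟨S, hS, hSc⟩ := exists_isCover (by omega) hm
  apply le_antisymm
  · exact le_trans (Nat.sInf_le ⟨S, hS, rfl⟩) hSc
  · refine le_csInf ⟨_, S, hS, rfl⟩ ?_
    rintro _ ⟨T, hT, rfl⟩
    rw [Nat.ceil_le, div_le_iff₀ hk]
    exact_mod_cast two_mul_le_of_isCover hT
end

section
/- Let n > d > ℓ ≥ 1 be integers, let r be the unique integer with 0 < r ≤ ℓ+1 and r ≡ d+1 (mod ℓ+1), and set k = ⌈(d+1)/(ℓ+1)⌉ and k' = ⌊(d+1)/(ℓ+1)⌋. Color each Q ∈ H_n^ℓ by the (ℓ+1)-tuple (c_1,…,c_{ℓ+1}) where c_i = w_i(Q) mod k for 1 ≤ i ≤ r and c_i = w_i(Q) mod k' for r+1 ≤ i ≤ ℓ+1. Then this coloring of H_n^ℓ is d,ℓ-polychromatic: every d-dimensional subcube of Q_n contains, for each of the k^r·k'^(ℓ+1-r) possible tuples, an ℓ-dimensional subcube receiving that tuple as its color. -/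
/-- `wvec Q j` is `w_j(Q)` for `1 ≤ j ≤ ℓ+1`: the number of coordinates fixed to `1`
in `Q` having exactly `j - 1` ∗-coordinates of `Q` below them; with the ∗-coordinates
of `Q` listed as `s_1 < ⋯ < s_ℓ`, this is `|{x ∈ on(Q) : x < s_1}|` for `j = 1`,
`|{x ∈ on(Q) : s_{j-1} < x < s_j}|` for `2 ≤ j ≤ ℓ`, and `|{x ∈ on(Q) : x > s_ℓ}|`
for `j = ℓ+1`. -/
def wvec {n : ℕ} (Q : Fin n → Option Bool) (j : ℕ) : ℕ :=
  (Finset.univ.filter (fun x => Q x = some true ∧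
    (Finset.univ.filter (fun y => Q y = none ∧ y < x)).card = j - 1)).card

/-- The number of ∗-coordinates of `B` strictly below `x`. For a ∗-coordinate `x` this is its
position, counted from `0`, in the increasing list of ∗-coordinates. -/
def starRank {n : ℕ} (B : Fin n → Option Bool) (x : Fin n) : ℕ :=
  (Finset.univ.filter (fun y => B y = none ∧ y < x)).card

lemma starRank_mono {n : ℕ} (B : Fin n → Option Bool) {x y : Fin n} (h : x ≤ y) :
    starRank B x ≤ starRank B y := by
  apply Finset.card_le_card
  intro z hz
  simp only [Finset.mem_filter, Finset.mem_univ, true_and] at hz ⊢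
  exact ⟨hz.1, hz.2.trans_le h⟩

lemma starRank_lt_iff {n : ℕ} (B : Fin n → Option Bool) {x y : Fin n} (hy : B y = none) :
    starRank B y < starRank B x ↔ y < x := by
  constructor
  · intro h
    by_contra hxy
    exact absurd (starRank_mono B (not_lt.mp hxy)) (by omega)
  · intro h
    apply Finset.card_lt_card
    rw [Finset.ssubset_iff_of_subset]
    · exact ⟨y, by simp [hy, h], by simp⟩
    · intro z hz
      simp only [Finset.mem_filter, Finset.mem_univ, true_and] at hz ⊢
      exact ⟨hz.1, hz.2.trans h⟩

lemma starRank_le_dim {n : ℕ} (B : Fin n → Option Bool) (x : Fin n) :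
    starRank B x ≤ Subcube.dim B := by
  apply Finset.card_le_card
  intro z hz
  simp only [Finset.mem_filter, Finset.mem_univ, true_and] at hz ⊢
  exact hz.1

lemma starRank_injOn {n : ℕ} (B : Fin n → Option Bool) :
    Set.InjOn (starRank B) {x | B x = none} := by
  intro x hx y hy hxy
  have h1 := starRank_lt_iff B (x := y) hx
  have h2 := starRank_lt_iff B (x := x) hy
  exact le_antisymm (not_lt.mp fun h => by have := h2.mpr h; omega)
    (not_lt.mp fun h => by have := h1.mpr h; omega)

lemma image_starRank {n : ℕ} (B : Fin n → Option Bool) :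
    (Finset.univ.filter (fun x => B x = none)).image (starRank B)
      = Finset.range (Subcube.dim B) := by
  apply Finset.eq_of_subset_of_card_le
  · intro i hi
    simp only [Finset.mem_image, Finset.mem_filter, Finset.mem_univ, true_and] at hi
    obtain ⟨x, hx, rfl⟩ := hi
    rw [Finset.mem_range]
    apply Finset.card_lt_card
    rw [Finset.ssubset_iff_of_subset]
    · exact ⟨x, by simp [hx], by simp⟩
    · intro z hz
      simp only [Finset.mem_filter, Finset.mem_univ, true_and] at hz ⊢
      exact hz.1
  · rw [Finset.card_image_of_injOn, Finset.card_range]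
    · rfl
    · intro x hx y hy
      exact starRank_injOn B (by simpa using hx) (by simpa using hy)

/-- Ranks run bijectively through `0, …, dim B - 1`, so ∗-coordinates selected by a condition on
their rank can be counted among natural numbers. -/
lemma card_star_filter {n : ℕ} (B : Fin n → Option Bool) (P : ℕ → Prop) [DecidablePred P] :
    (Finset.univ.filter (fun x => B x = none ∧ P (starRank B x))).card
      = ((Finset.range (Subcube.dim B)).filter P).card := by
  rw [← image_starRank, Finset.filter_image, Finset.filter_filter, Finset.card_image_of_injOn]
  intro x hx y hy
  exact starRank_injOn B (by simp at hx; exact hx.1) (by simp at hy; exact hy.1)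

lemma StrictMono.exists_block {M : ℕ → ℕ} (hM : StrictMono M) (h0 : M 0 = 0) (i : ℕ) :
    ∃ j, M j ≤ i ∧ i < M (j + 1) := by
  induction i with
  | zero => exact ⟨0, by omega, by have := hM Nat.zero_lt_one; simpa [h0] using this⟩
  | succ i ih =>
    obtain ⟨j, h1, h2⟩ := ih
    by_cases h : i + 1 < M (j + 1)
    · exact ⟨j, by omega, h⟩
    · have := hM (Nat.lt_succ_self (j + 1))
      exact ⟨j + 1, by omega, by simp only [Nat.succ_eq_add_one] at this; omega⟩

/-- The block containing a given number is determined. -/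
lemma StrictMono.block_unique {M : ℕ → ℕ} (hM : StrictMono M) {i j j' : ℕ}
    (h1 : M j ≤ i) (h2 : i < M (j + 1)) (h1' : M j' ≤ i) (h2' : i < M (j' + 1)) : j = j' := by
  have a : j < j' + 1 := hM.lt_iff_lt.mp (by omega)
  have b : j' < j + 1 := hM.lt_iff_lt.mp (by omega)
  omega

open Classical in
/-- A number in block `J` has exactly `J` of the cut positions `M 1 - 1, …, M ℓ - 1` below it. -/
lemma card_cuts {M : ℕ → ℕ} (hM : StrictMono M) (h0 : M 0 = 0) {d ℓ J ρ : ℕ}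
    (hd : M (ℓ + 1) = d + 1) (hJ : J ≤ ℓ) (h1 : M J ≤ ρ) (h2 : ρ < M (J + 1)) :
    ((Finset.range d).filter
      (fun i => (∃ j, 1 ≤ j ∧ j ≤ ℓ ∧ i + 1 = M j) ∧ i < ρ)).card = J := by
  have pos : ∀ j, 1 ≤ j → 1 ≤ M j := fun j hj => by have := hM hj; omega
  have : (Finset.range d).filter (fun i => (∃ j, 1 ≤ j ∧ j ≤ ℓ ∧ i + 1 = M j) ∧ i < ρ)
      = (Finset.Icc 1 J).image (fun j => M j - 1) := by
    ext i
    simp only [Finset.mem_filter, Finset.mem_range, Finset.mem_image, Finset.mem_Icc]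
    constructor
    · rintro ⟨-, ⟨j, hj1, hj2, hij⟩, hi⟩
      have : j < J + 1 := hM.lt_iff_lt.mp (by omega)
      exact ⟨j, ⟨hj1, by omega⟩, by omega⟩
    · rintro ⟨j, ⟨hj1, hj2⟩, rfl⟩
      have a := pos j hj1
      have b : M j ≤ M J := hM.monotone hj2
      have c : M J < M (ℓ + 1) := hM (by omega)
      exact ⟨by omega, ⟨j, hj1, by omega, by omega⟩, by omega⟩
  rw [this, Finset.card_image_of_injOn, Nat.card_Icc, Nat.add_sub_cancel]
  intro j hj j' hj' h
  simp only [Finset.coe_Icc, Set.mem_Icc] at hj hj'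
  have a := pos j hj.1
  have b := pos j' hj'.1
  exact hM.injective (by simp only at h; omega)

/-- The construction for arbitrary block lengths: if `M` is the sequence of partial sums of positive
moduli `M (j + 1) - M j`, for `0 ≤ j ≤ ℓ`, with total `d + 1`, then every `d`-cube contains an
`ℓ`-cube whose `w`-vector has prescribed residues. -/
lemma exists_subcube_of_strictMono {n d ℓ : ℕ} {B : Fin n → Option Bool}
    (hB : Subcube.dim B = d) {M : ℕ → ℕ} (hM : StrictMono M) (h0 : M 0 = 0)
    (hd : M (ℓ + 1) = d + 1) (c : ℕ → ℕ) (hc : ∀ j ≤ ℓ, c j < M (j + 1) - M j) :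
    ∃ Q ∈ cubes n ℓ, containedIn Q B ∧
      ∀ j ≤ ℓ, wvec Q (j + 1) % (M (j + 1) - M j) = c j := by
  classical
  -- `a j` counts the ones already present in `B` that land in the `j`-th gap of `Q`
  let a : ℕ → ℕ := fun j => (Finset.univ.filter (fun x => B x = some true ∧
    (M j ≤ starRank B x ∧ starRank B x < M (j + 1)))).card
  -- `t j` new ones, with `t j ≡ c j - a j`, bring the count to the residue `c j`
  have ht : ∀ j, ∃ t, j ≤ ℓ → M j + t < M (j + 1) ∧ (a j + t) % (M (j + 1) - M j) = c j := by
    intro j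
    have hm := hM (Nat.lt_succ_self j)
    simp only [Nat.succ_eq_add_one] at hm
    set m := M (j + 1) - M j with hmdef
    have hmpos : 0 < m := by omega
    refine ⟨(c j + (m - a j % m)) % m, fun hj => ⟨?_, ?_⟩⟩
    · have := Nat.mod_lt (c j + (m - a j % m)) hmpos
      omega
    · have hcj := hc j hj
      have h1 := Nat.mod_lt (a j) hmpos
      rw [Nat.add_mod_mod, ← Nat.mod_add_mod,
        show a j % m + (c j + (m - a j % m)) = c j + m by omega,
        Nat.add_mod_right, Nat.mod_eq_of_lt hcj]
  choose t ht using ht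
  let cut : ℕ → Prop := fun i => ∃ j, 1 ≤ j ∧ j ≤ ℓ ∧ i + 1 = M j
  let one : ℕ → Prop := fun i => ∃ j, j ≤ ℓ ∧ M j ≤ i ∧ i < M j + t j
  let Q : Fin n → Option Bool := fun x =>
    if B x = none then (if cut (starRank B x) then none else some (decide (one (starRank B x))))
    else B x
  have Qnone : ∀ x, Q x = none ↔ B x = none ∧ cut (starRank B x) := by
    intro x
    by_cases h : B x = none <;> by_cases h' : cut (starRank B x) <;> simp [Q, h, h']
  -- an element of `one` lies strictly before the last position of its block, hence is no cut
  have one_not_cut : ∀ i, one i → ¬ cut i := by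
    rintro i ⟨j, hj, h1, h2⟩ ⟨j', h1', hj', h2'⟩
    have h3 := (ht j hj).1
    have h4 : j < j' := hM.lt_iff_lt.mp (by omega)
    have h5 : j' < j + 1 := hM.lt_iff_lt.mp (by omega)
    omega
  have Qtrue : ∀ x, Q x = some true ↔
      B x = some true ∨ B x = none ∧ one (starRank B x) := by
    intro x
    have := one_not_cut (starRank B x)
    by_cases h : B x = none
    · by_cases h' : cut (starRank B x)
      · have h'' : ¬ one (starRank B x) := fun h => this h h'
        simp [Q, h, h', h'']
      · simp [Q, h, h']
    · simp [Q, h]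
  have hQrank : ∀ x J, J ≤ ℓ → ((Finset.univ.filter (fun y => Q y = none ∧ y < x)).card = J ↔
      M J ≤ starRank B x ∧ starRank B x < M (J + 1)) := by
    intro x J hJ
    have key : ∀ K, K ≤ ℓ → M K ≤ starRank B x → starRank B x < M (K + 1) →
        (Finset.univ.filter (fun y => Q y = none ∧ y < x)).card = K := by
      intro K hK h1 h2
      rw [← card_cuts hM h0 hd hK h1 h2, ← hB,
        ← card_star_filter B (fun i => cut i ∧ i < starRank B x)]
      congr 1
      ext y
      simp only [Finset.mem_filter, Finset.mem_univ, true_and, Qnone]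
      constructor
      · rintro ⟨⟨h, h'⟩, h''⟩
        exact ⟨h, h', (starRank_lt_iff B h).mpr h''⟩
      · rintro ⟨h, h', h''⟩
        exact ⟨⟨h, h'⟩, (starRank_lt_iff B h).mp h''⟩
    constructor
    · intro h
      obtain ⟨K, h1, h2⟩ := hM.exists_block h0 (starRank B x)
      have hx := starRank_le_dim B x
      have hK : K < ℓ + 1 := hM.lt_iff_lt.mp (by omega)
      have := key K (by omega) h1 h2
      obtain rfl : K = J := by omega
      exact ⟨h1, h2⟩
    · rintro ⟨h1, h2⟩
      exact key J hJ h1 h2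
  refine ⟨Q, ?_, ?_, ?_⟩
  · suffices hdimQ : Subcube.dim Q = ℓ by simpa only [cubes, Finset.mem_filter_univ] using hdimQ
    simp only [Subcube.dim, Qnone]
    -- all cuts lie below rank `d`, which belongs to the last block
    have hlast := hM (Nat.lt_succ_self ℓ)
    rw [card_star_filter B cut, hB,
      ← card_cuts hM h0 hd le_rfl (ρ := d) (by simp only [Nat.succ_eq_add_one] at hlast; omega)
        (by omega)]
    congr 1
    ext i
    simp only [Finset.mem_filter, Finset.mem_range, cut]
    tauto
  · intro x b hx
    simp [Q, hx]
  · intro J hJ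
    rw [← (ht J hJ).2]
    congr 1
    have hsplit : Finset.univ.filter (fun x => Q x = some true ∧
          (Finset.univ.filter (fun y => Q y = none ∧ y < x)).card = J + 1 - 1)
        = Finset.univ.filter (fun x => B x = some true ∧
            (M J ≤ starRank B x ∧ starRank B x < M (J + 1)))
          ∪ Finset.univ.filter (fun x => B x = none ∧
            (M J ≤ starRank B x ∧ starRank B x < M J + t J)) := by
      ext x
      simp only [Nat.add_sub_cancel, Finset.mem_filter, Finset.mem_univ, true_and,
        Finset.mem_union, Qtrue, hQrank x J hJ]
      constructor
      · rintro ⟨h | ⟨h, j, hj, h1, h2⟩, h3, h4⟩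
        · exact Or.inl ⟨h, h3, h4⟩
        · have h5 := (ht j hj).1
          obtain rfl := hM.block_unique h1 (by omega) h3 h4
          exact Or.inr ⟨h, h1, h2⟩
      · rintro (⟨h, h1, h2⟩ | ⟨h, h1, h2⟩)
        · exact ⟨Or.inl h, h1, h2⟩
        · have h5 := (ht J hJ).1
          exact ⟨Or.inr ⟨h, J, hJ, h1, h2⟩, h1, by omega⟩
    have hnew : ((Finset.range d).filter (fun i => M J ≤ i ∧ i < M J + t J)).card = t J := by
      have : (Finset.range d).filter (fun i => M J ≤ i ∧ i < M J + t J)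
          = Finset.Ico (M J) (M J + t J) := by
        ext i
        have h5 := (ht J hJ).1
        have h6 : M (J + 1) ≤ M (ℓ + 1) := hM.monotone (by omega)
        simp only [Finset.mem_filter, Finset.mem_range, Finset.mem_Ico]
        omega
      rw [this, Nat.card_Ico, Nat.add_sub_cancel_left]
    unfold wvec
    rw [hsplit, Finset.card_union_of_disjoint,
      card_star_filter B (fun i => M J ≤ i ∧ i < M J + t J), hB, hnew]
    rw [Finset.disjoint_filter]
    rintro x - ⟨h, -⟩ ⟨h', -⟩
    simp [h] at h'

/-- with `k = ⌈(d+1)/(ℓ+1)⌉`, `k' = ⌊(d+1)/(ℓ+1)⌋`, `0 < r ≤ ℓ+1`,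
`r ≡ d+1 (mod ℓ+1)`, coloring each `Q ∈ H_n^ℓ` by the tuple whose `i`-th entry is
`w_i(Q) mod k` for `i ≤ r` and `w_i(Q) mod k'` for `i > r` is `d,ℓ`-polychromatic:
every `d`-dimensional subcube contains an `ℓ`-dimensional subcube of each of the
`k^r · k'^(ℓ+1-r)` possible colors. -/
theorem coloring_is_polychromatic (n d ℓ r : ℕ) (hℓ : 1 ≤ ℓ) (hℓd : ℓ < d) (hdn : d < n)
    (hr0 : 0 < r) (hr1 : r ≤ ℓ + 1) (hrmod : r % (ℓ + 1) = (d + 1) % (ℓ + 1)) :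
    ∀ B ∈ cubes n d, ∀ c : Fin (ℓ + 1) → ℕ,
      (∀ i : Fin (ℓ + 1),
        (i.val + 1 ≤ r → c i < (d + 1 + ℓ) / (ℓ + 1)) ∧
        (r < i.val + 1 → c i < (d + 1) / (ℓ + 1))) →
      ∃ Q ∈ cubes n ℓ, containedIn Q B ∧
        ∀ i : Fin (ℓ + 1),
          (if i.val + 1 ≤ r then wvec Q (i.val + 1) % ((d + 1 + ℓ) / (ℓ + 1))
           else wvec Q (i.val + 1) % ((d + 1) / (ℓ + 1))) = c i := by
  intro B hB c hc
  have hdim : Subcube.dim B = d := by simpa [cubes] using hB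
  set k := (d + 1 + ℓ) / (ℓ + 1) with hk
  set k' := (d + 1) / (ℓ + 1) with hk'
  have hk'pos : 0 < k' := Nat.div_pos (by omega) (by omega)
  -- the moduli sum to `d + 1`; the case `r = ℓ + 1` is the one where `ℓ + 1 ∣ d + 1`
  have hsum : r * k + (ℓ + 1 - r) * k' = d + 1 ∧ 0 < k := by
    have hdiv := Nat.div_add_mod (d + 1) (ℓ + 1)
    rw [← hk', ← hrmod] at hdiv
    rcases Nat.lt_or_ge r (ℓ + 1) with h | h
    · rw [Nat.mod_eq_of_lt h] at hdiv
      have hkk : k = k' + 1 := by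
        rw [hk, show d + 1 + ℓ = (r - 1) + (ℓ + 1) * (k' + 1) by rw [mul_add]; omega,
          Nat.add_mul_div_left _ _ (by omega), Nat.div_eq_of_lt (by omega), Nat.zero_add]
      refine ⟨?_, by omega⟩
      obtain ⟨s, hs⟩ := Nat.exists_eq_add_of_le hr1
      rw [hkk, ← hdiv, hs, Nat.add_sub_cancel_left]
      ring
    · obtain rfl : r = ℓ + 1 := by omega
      rw [Nat.mod_self, Nat.add_zero] at hdiv
      have hkk : k = k' := by
        rw [hk, ← hdiv, Nat.add_comm, Nat.add_mul_div_left _ _ (by omega),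
          Nat.div_eq_of_lt (by omega), Nat.zero_add]
      rw [hkk, Nat.sub_self, Nat.zero_mul, Nat.add_zero]
      exact ⟨hdiv, hk'pos⟩
  let M : ℕ → ℕ := fun j => ∑ i ∈ Finset.range j, if i + 1 ≤ r then k else k'
  have hstep : ∀ j, M (j + 1) = M j + if j + 1 ≤ r then k else k' :=
    fun j => Finset.sum_range_succ _ j
  have hdiff : ∀ j, M (j + 1) - M j = if j + 1 ≤ r then k else k' :=
    fun j => by rw [hstep]; omega
  have hMr : ∀ j, j ≤ r → M j = j * k := by
    intro j hj
    induction j with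
    | zero => simp [M]
    | succ j ih => rw [hstep, ih (by omega), if_pos hj]; ring
  have hMadd : ∀ s, M (r + s) = r * k + s * k' := by
    intro s
    induction s with
    | zero => simpa using hMr r le_rfl
    | succ s ih => rw [← Nat.add_assoc, hstep, ih, if_neg (by omega)]; ring
  have hM : StrictMono M := strictMono_nat_of_lt_succ fun j => by
    rw [hstep]
    split_ifs <;> omega
  have hd : M (ℓ + 1) = d + 1 := by
    rw [← hsum.1, ← hMadd, Nat.add_sub_cancel' hr1]
  obtain ⟨Q, hQ, hQB, hw⟩ := exists_subcube_of_strictMono hdim hM (by simp [M]) hd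
    (fun j => if h : j < ℓ + 1 then c ⟨j, h⟩ else 0) (by
      intro j hj
      rw [hdiff, dif_pos (by omega)]
      split_ifs with h
      · exact (hc ⟨j, by omega⟩).1 h
      · exact (hc ⟨j, by omega⟩).2 (not_le.mp h))
  refine ⟨Q, hQ, hQB, fun i => ?_⟩
  have := hw i.val (by omega)
  rw [hdiff, dif_pos i.isLt] at this
  split_ifs with h
  · rwa [if_pos h] at this
  · rwa [if_neg h] at this
end
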